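/- Let M be the monoid ring ℤ[ℕ × ℕ] with ℤ-basis {e(i,j) : i,j ∈ ℕ} and multiplication determined recursively by e(i,j)·e(k,l) defined via the rewriting rule e(0,1)·e(1,0) = e(1,1) + e(0,0) (i.e., the ring with basis xⁱ∂ʲ and relation ∂x = x∂ + 1). Then M is isomorphic as a ring to the integral Weyl algebra A₁. -/

import Mathlib

/-- The defining relation of the integral Weyl algebra `A₁ = ℤ⟨x,∂⟩/(∂x - x∂ - 1)`:
generator `0` is `x`, generator `1` is `∂`, and `∂ * x = x * ∂ + 1`. -/
inductive WeylRel : FreeAlgebra ℤ (Fin 2) → FreeAlgebra ℤ (Fin 2) → Prop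
  | rel : WeylRel (FreeAlgebra.ι ℤ 1 * FreeAlgebra.ι ℤ 0)
      (FreeAlgebra.ι ℤ 0 * FreeAlgebra.ι ℤ 1 + 1)

/-- The integral Weyl algebra on one variable. -/
abbrev Weyl : Type := RingQuot WeylRel

/-- The element `x` of the integral Weyl algebra. -/
noncomputable def Wx : Weyl := RingQuot.mkRingHom WeylRel (FreeAlgebra.ι ℤ 0)

/-- The element `∂` of the integral Weyl algebra. -/
noncomputable def Wd : Weyl := RingQuot.mkRingHom WeylRel (FreeAlgebra.ι ℤ 1)

/-!
Pushing every `d` to the right of every `x` with `d * x ^ i = x ^ i * d + i • x ^ (i - 1)` shows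
that the span of the ordered monomials `x ^ i * d ^ j` is a left ideal containing `1`, so these
monomials span. They are independent because they act on `R[∂][x]`, with `x` acting as
multiplication and `d` as multiplication by `∂` plus `d/dx`: the monomial `x ^ i * d ^ j` sends `1`
to its own symbol `x ^ i * ∂ ^ j`.
-/

universe u

section Spanning

variable {R A : Type*} [CommSemiring R] [Semiring A] [Algebra R A]

theorem submodule_eq_top_of_forall_mul_mem {s : Set A} (hs : Algebra.adjoin R s = ⊤)
    {S : Submodule R A} (one_mem : 1 ∈ S) (mul_mem : ∀ a ∈ s, ∀ b ∈ S, a * b ∈ S) : S = ⊤ := by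
  rw [eq_top_iff, ← Algebra.top_toSubmodule, ← hs, Algebra.adjoin_eq_span, Submodule.span_le]
  intro m hm
  induction hm using Submonoid.closure_induction_left with
  | one => exact one_mem
  | mul_left a ha b _ hb => exact mul_mem a ha b hb

theorem mul_pow_of_mul_eq_mul_add {B : Type*} [Semiring B] {x d c : B} (h : d * x = x * d + c)
    (hc : Commute x c) (n : ℕ) : d * x ^ n = x ^ n * d + n • (x ^ (n - 1) * c) := by
  induction n with
  | zero => simp
  | succ n ih =>
    have absorb : n • (x ^ (n - 1) * c) * x = n • (x ^ n * c) := by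
      cases n with
      | zero => simp
      | succ k => rw [Nat.add_sub_cancel, smul_mul_assoc, mul_assoc, ← hc.eq, ← mul_assoc, pow_succ]
    calc d * x ^ (n + 1) = d * x ^ n * x := by rw [pow_succ, mul_assoc]
      _ = x ^ n * (d * x) + n • (x ^ n * c) := by rw [ih, add_mul, absorb, mul_assoc]
      _ = x ^ (n + 1) * d + (n + 1) • (x ^ n * c) := by
        rw [h, mul_add, ← mul_assoc, ← pow_succ, add_assoc, succ_nsmul']

theorem span_range_pow_mul_pow_eq_top {x d : A} (h : d * x = x * d + 1)
    (hgen : Algebra.adjoin R {x, d} = ⊤) :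
    Submodule.span R (Set.range fun p : ℕ × ℕ => x ^ p.1 * d ^ p.2) = ⊤ := by
  set S := Submodule.span R (Set.range fun p : ℕ × ℕ => x ^ p.1 * d ^ p.2)
  have monomial_mem (i j : ℕ) : x ^ i * d ^ j ∈ S := Submodule.subset_span ⟨(i, j), rfl⟩
  have mul_mem {a : A} (ha : ∀ i j : ℕ, a * (x ^ i * d ^ j) ∈ S) : ∀ b ∈ S, a * b ∈ S := by
    suffices S ≤ S.comap (LinearMap.mulLeft R a) from this
    rw [Submodule.span_le]
    rintro _ ⟨⟨i, j⟩, rfl⟩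
    exact ha i j
  have x_mul_mem (i j : ℕ) : x * (x ^ i * d ^ j) ∈ S := by
    rw [← mul_assoc, ← pow_succ']
    exact monomial_mem (i + 1) j
  have d_mul_mem (i j : ℕ) : d * (x ^ i * d ^ j) ∈ S := by
    rw [← mul_assoc, mul_pow_of_mul_eq_mul_add h (Commute.one_right x), mul_one, add_mul,
      mul_assoc, ← pow_succ', smul_mul_assoc]
    exact S.add_mem (monomial_mem i (j + 1)) (S.nsmul_mem (monomial_mem (i - 1) j) i)
  refine submodule_eq_top_of_forall_mul_mem hgen (by simpa using monomial_mem 0 0) ?_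
  rintro a (rfl | rfl)
  · exact mul_mem x_mul_mem
  · exact mul_mem d_mul_mem

end Spanning

section Independence

open Polynomial

variable (R : Type*) [CommSemiring R]

/-- The operator by which the generator `x` of the Weyl algebra acts on symbols. Symbols are
polynomials in `x` over `R[∂]`: the outer variable `X` of `R[X][X]` is `x` and `C X` is `∂`. -/
noncomputable def symbolX : Module.End R R[X][X] :=
  LinearMap.mulLeft R X

/-- The operator `∂ + d/dx` by which the generator `d` of the Weyl algebra acts on symbols. -/
noncomputable def symbolD : Module.End R R[X][X] :=
  LinearMap.mulLeft R (C X) + derivative.restrictScalars R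

theorem symbolX_apply (p : R[X][X]) : symbolX R p = X * p := rfl

theorem symbolD_apply (p : R[X][X]) : symbolD R p = C X * p + derivative p := rfl

theorem symbolD_mul_symbolX : symbolD R * symbolX R = symbolX R * symbolD R + 1 := by
  ext1 p
  simp only [Module.End.mul_apply, LinearMap.add_apply, Module.End.one_apply, symbolX_apply,
    symbolD_apply, derivative_mul, derivative_X]
  ring

theorem symbolX_pow_mul_symbolD_pow_apply_one (i j : ℕ) :
    (symbolX R ^ i * symbolD R ^ j) 1 = X ^ i * C X ^ j := by
  have symbolD_pow : (symbolD R ^ j) 1 = C X ^ j := by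
    induction j with
    | zero => simp
    | succ j ih =>
      rw [pow_succ', Module.End.mul_apply, ih, symbolD_apply, ← C_pow, derivative_C, add_zero,
        C_pow, pow_succ']
  rw [Module.End.mul_apply, symbolD_pow, symbolX, LinearMap.pow_mulLeft, LinearMap.mulLeft_apply]

theorem linearIndependent_X_pow (S : Type*) [Semiring S] :
    LinearIndependent S fun n : ℕ => (X ^ n : S[X]) := by
  simpa only [coe_basisMonomials, monomial_one_right_eq_X_pow] using
    (basisMonomials S).linearIndependent

theorem linearIndependent_X_pow_mul_C_X_pow :
    LinearIndependent R fun p : ℕ × ℕ => (X ^ p.1 * C X ^ p.2 : R[X][X]) := by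
  have h := (linearIndependent_smul (linearIndependent_X_pow R) (linearIndependent_X_pow R[X])).comp
    Prod.swap Prod.swap_injective
  simpa only [Function.comp_def, Prod.fst_swap, Prod.snd_swap, smul_eq_C_mul, C_pow, mul_comm]
    using h

theorem linearIndependent_symbolX_pow_mul_symbolD_pow :
    LinearIndependent R fun p : ℕ × ℕ => symbolX R ^ p.1 * symbolD R ^ p.2 := by
  refine .of_comp (LinearMap.applyₗ (1 : R[X][X])) ?_
  simpa only [Function.comp_def, LinearMap.applyₗ_apply_apply,
    symbolX_pow_mul_symbolD_pow_apply_one] using linearIndependent_X_pow_mul_C_X_pow R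

end Independence

theorem stmt_9_general {R : Type u} {A : Type*} [CommSemiring R] [Semiring A] [Algebra R A]
    {x d : A} (h : d * x = x * d + 1) (hgen : Algebra.adjoin R {x, d} = ⊤)
    (hlift : ∀ {B : Type u} [Semiring B] [Algebra R B] {p q : B}, q * p = p * q + 1 →
      ∃ φ : A →ₐ[R] B, φ x = p ∧ φ d = q) :
    ∃ e : ((ℕ × ℕ) →₀ R) ≃ₗ[R] A, ∀ i j : ℕ, e (Finsupp.single (i, j) 1) = x ^ i * d ^ j := by
  obtain ⟨φ, hx, hd⟩ := hlift (symbolD_mul_symbolX R)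
  have independent : LinearIndependent R fun p : ℕ × ℕ => x ^ p.1 * d ^ p.2 := by
    refine .of_comp φ.toLinearMap ?_
    simpa only [Function.comp_def, AlgHom.toLinearMap_apply, map_mul, map_pow, hx, hd] using
      linearIndependent_symbolX_pow_mul_symbolD_pow R
  let b := Module.Basis.mk independent (span_range_pow_mul_pow_eq_top h hgen).ge
  exact ⟨b.repr.symm, fun i j => by simp [b]⟩

theorem Wd_mul_Wx : Wd * Wx = Wx * Wd + 1 := by
  simpa only [map_mul, map_add, map_one] using! RingQuot.mkRingHom_rel WeylRel.rel

theorem mkAlgHom_ι_zero : RingQuot.mkAlgHom ℤ WeylRel (FreeAlgebra.ι ℤ 0) = Wx := by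
  rw [Wx, ← RingQuot.mkAlgHom_coe ℤ, RingHom.coe_coe]

theorem mkAlgHom_ι_one : RingQuot.mkAlgHom ℤ WeylRel (FreeAlgebra.ι ℤ 1) = Wd := by
  rw [Wd, ← RingQuot.mkAlgHom_coe ℤ, RingHom.coe_coe]

theorem adjoin_Wx_Wd : Algebra.adjoin ℤ {Wx, Wd} = ⊤ := by
  have range_ι :
      Set.range (FreeAlgebra.ι ℤ) = {FreeAlgebra.ι ℤ (0 : Fin 2), FreeAlgebra.ι ℤ 1} := by
    ext a
    simp [Fin.exists_fin_two, eq_comm]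
  rw [← mkAlgHom_ι_zero, ← mkAlgHom_ι_one, ← Set.image_pair, ← range_ι, ← AlgHom.map_adjoin,
    FreeAlgebra.adjoin_range_ι, Algebra.map_top, AlgHom.range_eq_top]
  exact RingQuot.mkAlgHom_surjective ℤ WeylRel

theorem exists_algHom_Wx_Wd {B : Type*} [Semiring B] [Algebra ℤ B] {p q : B}
    (h : q * p = p * q + 1) : ∃ φ : Weyl →ₐ[ℤ] B, φ Wx = p ∧ φ Wd = q := by
  have respects ⦃a b : FreeAlgebra ℤ (Fin 2)⦄ (hab : WeylRel a b) :
      FreeAlgebra.lift ℤ ![p, q] a = FreeAlgebra.lift ℤ ![p, q] b := by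
    cases hab
    simpa using h
  refine ⟨RingQuot.liftAlgHom ℤ ⟨FreeAlgebra.lift ℤ ![p, q], respects⟩, ?_, ?_⟩
  · simp [← mkAlgHom_ι_zero]
  · simp [← mkAlgHom_ι_one]

/-- The free `ℤ`-module on `ℕ × ℕ` (the underlying `ℤ`-module of the ring `M` with
basis `e(i,j)` and multiplication given by the Heisenberg rewriting rule) is additively
isomorphic to `A₁` via `e(i,j) ↦ xⁱ∂ʲ`; transporting the ring structure along this
bijection, `M` is isomorphic as a ring to the integral Weyl algebra `A₁`. -/
theorem stmt_9 : ∃ e : ((ℕ × ℕ) →₀ ℤ) ≃+ Weyl,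
    ∀ i j : ℕ, e (Finsupp.single (i, j) 1) = Wx ^ i * Wd ^ j := by
  obtain ⟨e, he⟩ := stmt_9_general Wd_mul_Wx adjoin_Wx_Wd exists_algHom_Wx_Wd
  exact ⟨e.toAddEquiv, he⟩
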